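/- Let G=(V,E) be a 3-connected circuit in the simple (2,2)-sparsity matroid, not isomorphic to a wheel or a cycle, with |V| ≥ 6 and no non-trivial 3-edge cutsets. Then the set of degree-3 vertices of G that are not contained in any copy of K4 induces a forest (a subgraph with no cycles) on at least two vertices. -/

import Mathlib

variable {V : Type*}

/-- The number of edges of `G` induced by the vertex set `X`. -/
noncomputable def indEdges (G : SimpleGraph V) (X : Set V) : ℕ :=
  {e ∈ G.edgeSet | ∀ v ∈ e, v ∈ X}.ncard

/-- A circuit in the simple (2,2)-sparsity matroid: `|E| = 2|V| - 1` and every proper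
subset of vertices induces at most `2|X| - 2` edges. -/
def IsCircuit [Fintype V] (G : SimpleGraph V) : Prop :=
  (G.edgeSet.ncard : ℤ) = 2 * Fintype.card V - 1 ∧
  ∀ X : Finset V, X ⊂ Finset.univ → indEdges G ↑X ≤ 2 * X.card - 2

/-- The degree of a vertex. -/
noncomputable def deg (G : SimpleGraph V) (v : V) : ℕ := (G.neighborSet v).ncard


/-- The number of edges of `G` with one endpoint in `A` and one endpoint in `B`. -/
noncomputable def crossEdges (G : SimpleGraph V) (A B : Set V) : ℕ :=
  {e ∈ G.edgeSet | ∃ a ∈ A, ∃ b ∈ B, e = s(a, b)}.ncard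

/-- `G` is a cycle graph: connected with every vertex of degree 2. -/
def IsCycleGraph (G : SimpleGraph V) : Prop :=
  G.Connected ∧ ∀ v : V, deg G v = 2

/-- `G` is a wheel: some hub is adjacent to all other vertices, and the rest induces
a cycle. -/
def IsWheel (G : SimpleGraph V) : Prop :=
  ∃ v : V, (∀ u : V, u ≠ v → G.Adj v u) ∧ IsCycleGraph (G.induce {x : V | x ≠ v})

/-- `G` is 3-connected: removing any set of at most 2 vertices leaves a connected
graph. -/
def ThreeConnected (G : SimpleGraph V) : Prop :=
  ∀ S : Set V, S.ncard ≤ 2 → (G.induce Sᶜ).Connected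

/-- `G` has a non-trivial 3-edge cutset: a bipartition of the vertices into two sides
with at least two vertices each and exactly 3 edges between them. -/
def HasNontrivialThreeEdgeCut [Fintype V] [DecidableEq V] (G : SimpleGraph V) : Prop :=
  ∃ A : Finset V, 2 ≤ A.card ∧ 2 ≤ (Finset.univ \ A).card ∧
    crossEdges G ↑A ↑(Finset.univ \ A) = 3

/-- The vertex `v` is contained in a copy of `K₄` in `G`. -/
def InK4 (G : SimpleGraph V) (v : V) : Prop :=
  ∃ s : Finset V, v ∈ s ∧ s.card = 4 ∧ ∀ a ∈ s, ∀ b ∈ s, a ≠ b → G.Adj a b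

/-!
Write `i(X)` for the number of edges induced by `X`. Sparsity of the complement of `X` turns into
the inequality `2|X| + i(X) < ∑ x ∈ X, deg x` for every nonempty proper `X`. A cycle of `k` nodes
(vertices of degree 3) would have degree sum `3k` and induce at least `k` edges, so it would span
the graph; but the average degree exceeds 3. Hence the nodes induce a forest.

For the count, `∑ (deg v - 4) = -2`, so there are two more nodes than the total excess
`∑ (deg v - 4)` over the vertices of degree at least five, and it suffices to charge each node lying
in a `K₄` injectively against that excess. By 3-connectivity a `K₄` contains at most one node and
two `K₄`s share at most one vertex. A `K₄` containing a node has a vertex of degree at least five,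
for otherwise exactly three edges would leave it. Charge it to that vertex: a vertex of degree `d`
lies in at most `d / 3 ≤ d - 4` such `K₄`s.
-/

section EdgeCounts

open Finset

variable {G : SimpleGraph V}

lemma deg_eq_degree (G : SimpleGraph V) (v : V) [Fintype (G.neighborSet v)] :
    deg G v = G.degree v :=
  Set.ncard_eq_toFinset_card' _

lemma indEdges_univ (G : SimpleGraph V) : indEdges G Set.univ = G.edgeSet.ncard := by
  simp [indEdges]

lemma ncard_edgeSet_induce (G : SimpleGraph V) (X : Set V) :
    (G.induce X).edgeSet.ncard = indEdges G X := by
  rw [← Set.ncard_image_of_injective _ (Sym2.map.injective Subtype.val_injective), indEdges]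
  congr 1
  ext e
  induction e with | _ a b
  constructor
  · rintro ⟨e, he, h⟩
    induction e with | _ x y
    rw [← h]
    exact ⟨he, by simp⟩
  · rintro ⟨hab, hX⟩
    exact ⟨s(⟨a, hX a (by simp)⟩, ⟨b, hX b (by simp)⟩), hab, rfl⟩

lemma indEdges_le_choose_two (G : SimpleGraph V) (X : Finset V) :
    indEdges G X ≤ (#X).choose 2 := by
  classical
  rw [← ncard_edgeSet_induce, ← SimpleGraph.coe_edgeFinset, Set.ncard_coe_finset]
  exact SimpleGraph.card_edgeFinset_le_card_choose_two.trans_eq (by simp)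

lemma indEdges_eq_choose_two {X : Finset V} (hX : G.IsClique X) :
    indEdges G X = (#X).choose 2 := by
  classical
  rw [← ncard_edgeSet_induce, G.induce_eq_top.mpr hX, ← SimpleGraph.coe_edgeFinset,
    Set.ncard_coe_finset, SimpleGraph.card_edgeFinset_top_eq_card_choose_two]
  simp

lemma length_le_indEdges [Finite V] {u v : V} {p : G.Walk u v} (hp : p.IsTrail) :
    p.length ≤ indEdges G {x | x ∈ p.support} := by
  classical
  rw [← p.length_edges, ← List.toFinset_card_of_nodup hp.edges_nodup, ← Set.ncard_coe_finset]
  refine Set.ncard_le_ncard (fun e he ↦ ?_)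
  rw [mem_coe, List.mem_toFinset] at he
  exact ⟨p.edges_subset_edgeSet he, fun x hx ↦ p.mem_support_of_mem_edges he hx⟩

lemma crossEdges_pos [Finite V] {A B : Set V} {a b : V} (ha : a ∈ A) (hb : b ∈ B)
    (hab : G.Adj a b) : 0 < crossEdges G A B :=
  (Set.ncard_pos).2 ⟨s(a, b), hab, a, ha, b, hb, rfl⟩

lemma indEdges_add_indEdges_add_crossEdges [Finite V] (G : SimpleGraph V) (X Y : Set V) :
    indEdges G X + indEdges G Y + crossEdges G (X \ Y) (Y \ X) =
      indEdges G (X ∪ Y) + indEdges G (X ∩ Y) := by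
  unfold indEdges crossEdges
  rw [← Set.ncard_union_add_ncard_inter {e ∈ G.edgeSet | ∀ v ∈ e, v ∈ X}, add_right_comm,
    ← Set.ncard_union_eq]
  · congr 2
    · ext e
      induction e with | _ a b
      simp only [Set.mem_union, Set.mem_ofPred_eq, Sym2.mem_iff, Sym2.eq_iff, Set.mem_sdiff]
      grind
    · ext e
      simp only [Set.mem_inter_iff, Set.mem_ofPred_eq]
      grind
  · rw [Set.disjoint_left]
    rintro _ he ⟨-, a, ha, b, hb, rfl⟩
    simp only [Set.mem_union, Set.mem_ofPred_eq, Sym2.mem_iff] at he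
    grind

lemma sum_deg_eq_two_mul_indEdges_add_crossEdges [Finite V] (G : SimpleGraph V) (X : Finset V) :
    ∑ x ∈ X, deg G x = 2 * indEdges G X + crossEdges G X (X : Set V)ᶜ := by
  classical
  have := Fintype.ofFinite V
  have incidences : ∑ x ∈ X, deg G x = ∑ e ∈ G.edgeFinset, #{x ∈ X | x ∈ e} := by
    simp_rw [deg_eq_degree, ← G.card_incidenceFinset_eq_degree, G.incidenceFinset_eq_filter]
    exact sum_card_bipartiteAbove_eq_sum_card_bipartiteBelow _
  have induced : indEdges G X = #{e ∈ G.edgeFinset | ∀ v ∈ e, v ∈ X} := by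
    rw [← Set.ncard_coe_finset]
    simp [indEdges]
  have cross : crossEdges G X (X : Set V)ᶜ =
      #{e ∈ G.edgeFinset | ∃ a ∈ X, ∃ b ∉ X, e = s(a, b)} := by
    rw [← Set.ncard_coe_finset]
    simp [crossEdges]
  rw [incidences, induced, cross, card_filter, card_filter, mul_sum, ← sum_add_distrib]
  refine sum_congr rfl fun e he ↦ ?_
  induction e with | _ a b
  have hab : a ≠ b := (SimpleGraph.mem_edgeFinset.1 he).ne
  have ends : ({x ∈ X | x ∈ s(a, b)} : Finset V) = {x ∈ ({a, b} : Finset V) | x ∈ X} := by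
    ext; simp [and_comm]
  rw [ends]
  by_cases ha : a ∈ X <;> by_cases hb : b ∈ X <;>
    simp [filter_insert, filter_singleton, ha, hb, hab] <;> grind

lemma hasNontrivialThreeEdgeCut_of_sum_deg [Fintype V] [DecidableEq V] {X : Finset V}
    (hX : 2 ≤ #X) (hXc : #X + 2 ≤ Fintype.card V)
    (hdeg : ∑ x ∈ X, deg G x = 2 * indEdges G X + 3) : HasNontrivialThreeEdgeCut G := by
  refine ⟨X, hX, ?_, ?_⟩
  · rw [← compl_eq_univ_sdiff, card_compl]
    omega
  · rw [← compl_eq_univ_sdiff, coe_compl]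
    have := sum_deg_eq_two_mul_indEdges_add_crossEdges G X
    omega

end EdgeCounts

namespace IsCircuit

open Finset

variable [Fintype V] {G : SimpleGraph V}

lemma ncard_edgeSet_add_one (hG : IsCircuit G) : G.edgeSet.ncard + 1 = 2 * Fintype.card V := by
  have := hG.1
  omega

lemma nontrivial (hG : IsCircuit G) : Nontrivial V := by
  by_contra h
  rw [not_nontrivial_iff_subsingleton] at h
  have := hG.1
  rw [Subsingleton.elim G ⊥, SimpleGraph.edgeSet_bot, Set.ncard_empty] at this
  omega

lemma sum_deg_add_two (hG : IsCircuit G) : ∑ v, deg G v + 2 = 4 * Fintype.card V := by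
  have handshake := sum_deg_eq_two_mul_indEdges_add_crossEdges G univ
  have no_cross : crossEdges G (univ : Finset V) ((univ : Finset V) : Set V)ᶜ = 0 := by
    simp [crossEdges]
  rw [no_cross, coe_univ, indEdges_univ] at handshake
  have := hG.ncard_edgeSet_add_one
  omega

lemma two_mul_card_add_indEdges_lt_sum_deg (hG : IsCircuit G) {X : Finset V} (hX : X.Nonempty)
    (hXu : X ≠ univ) : 2 * #X + indEdges G X < ∑ x ∈ X, deg G x := by
  classical
  have sparse := hG.2 Xᶜ (by
    rwa [ssubset_univ_iff, Ne, compl_eq_univ_iff, ← Ne, ← nonempty_iff_ne_empty])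
  have split := indEdges_add_indEdges_add_crossEdges G X (X : Set V)ᶜ
  have empty : indEdges G ∅ = 0 := by simpa using indEdges_le_choose_two G ∅
  rw [Set.union_compl_self, Set.inter_compl_self, indEdges_univ, empty, Set.sdiff_compl,
    Set.inter_self, disjoint_compl_left.sdiff_eq_left] at split
  have := sum_deg_eq_two_mul_indEdges_add_crossEdges G X
  have := hG.ncard_edgeSet_add_one
  have := card_compl_add_card X
  have : 0 < #Xᶜ := by rwa [card_pos, nonempty_iff_ne_empty, Ne, compl_eq_empty_iff]
  rw [coe_compl] at sparse
  omega

lemma three_le_deg (hG : IsCircuit G) (v : V) : 3 ≤ deg G v := by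
  have := hG.nontrivial
  have := hG.two_mul_card_add_indEdges_lt_sum_deg (singleton_nonempty v) (singleton_ne_univ v)
  rw [card_singleton, sum_singleton] at this
  omega

lemma exists_mem_support_deg_ne_three (hG : IsCircuit G) {u : V} {c : G.Walk u u}
    (hc : c.IsCycle) : ∃ v ∈ c.support, deg G v ≠ 3 := by
  classical
  by_contra! cubic
  have support_card : #c.support.toFinset = c.length := by
    rw [← c.cons_tail_support, List.toFinset_cons,
      insert_eq_of_mem (List.mem_toFinset.2 (c.end_mem_tail_support hc.not_nil)),
      List.toFinset_card_of_nodup hc.support_nodup]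
    simp
  have sum_deg : ∑ v ∈ c.support.toFinset, deg G v = 3 * c.length := by
    rw [sum_const_nat fun v hv ↦ cubic v (List.mem_toFinset.1 hv), support_card, mul_comm]
  by_cases hu : c.support.toFinset = univ
  · have := hG.sum_deg_add_two
    have := hc.three_le_length
    rw [hu] at sum_deg support_card
    rw [card_univ] at support_card
    omega
  · have := hG.two_mul_card_add_indEdges_lt_sum_deg ⟨u, by simp⟩ hu
    have edges := length_le_indEdges hc.isTrail
    rw [List.coe_toFinset] at this
    omega

lemma isAcyclic_induce (hG : IsCircuit G) {S : Set V} (hS : ∀ v ∈ S, deg G v = 3) :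
    (G.induce S).IsAcyclic := by
  intro u c hc
  obtain ⟨v, hv, hdeg⟩ := hG.exists_mem_support_deg_ne_three
    (hc.map (f := (SimpleGraph.Embedding.induce S).toHom) Subtype.val_injective)
  rw [SimpleGraph.Walk.support_map, List.mem_map] at hv
  obtain ⟨w, -, rfl⟩ := hv
  exact hdeg (hS _ w.2)

end IsCircuit

lemma ThreeConnected.exists_adj {G : SimpleGraph V} (h3 : ThreeConnected G) {A S : Set V}
    (hS : S.ncard ≤ 2) (hA : (A \ S).Nonempty) (hAc : (Aᶜ \ S).Nonempty) :
    ∃ x ∈ A \ S, ∃ y ∈ Aᶜ \ S, G.Adj x y := by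
  obtain ⟨a, ha, haS⟩ := hA
  obtain ⟨b, hb, hbS⟩ := hAc
  obtain ⟨p⟩ := (h3 S hS).preconnected ⟨a, haS⟩ ⟨b, hbS⟩
  obtain ⟨d, -, hx, hy⟩ := p.exists_boundary_dart {x | x.1 ∈ A} ha hb
  exact ⟨d.fst, ⟨hx, d.fst.2⟩, d.snd, ⟨hy, d.snd.2⟩, d.adj⟩

lemma ThreeConnected.crossEdges_sdiff_pos [Finite V] {G : SimpleGraph V} (h3 : ThreeConnected G)
    {X Y : Set V} (hunion : X ∪ Y = Set.univ) (hinter : (X ∩ Y).ncard ≤ 2) (hXY : ¬ X ⊆ Y)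
    (hYX : ¬ Y ⊆ X) : 0 < crossEdges G (X \ Y) (Y \ X) := by
  obtain ⟨a, haX, haY⟩ := Set.not_subset.1 hXY
  obtain ⟨b, -, hbX⟩ := Set.not_subset.1 hYX
  obtain ⟨x, ⟨hxX, hxS⟩, y, ⟨hyX, -⟩, hxy⟩ := h3.exists_adj (A := X) hinter
    ⟨a, haX, fun h ↦ haY h.2⟩ ⟨b, hbX, fun h ↦ hbX h.1⟩
  have hy : y ∈ X ∪ Y := hunion ▸ Set.mem_univ y
  exact crossEdges_pos ⟨hxX, fun h ↦ hxS ⟨hxX, h⟩⟩ ⟨hy.resolve_left hyX, hyX⟩ hxy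

section Cliques

open Finset

variable {G : SimpleGraph V}

lemma mem_of_adj_of_deg_eq [Finite V] {k : ℕ} {K : Finset V} (hK : G.IsNClique (k + 1) K)
    {u y : V} (hu : u ∈ K) (hdeg : deg G u = k) (huy : G.Adj u y) : y ∈ K := by
  classical
  have nbrs : (K.erase u : Set V) = G.neighborSet u := by
    refine Set.eq_of_subset_of_ncard_le (fun x hx ↦ ?_) ?_
    · rw [coe_erase] at hx
      exact hK.isClique hu hx.1 (Ne.symm hx.2)
    · rw [Set.ncard_coe_finset, card_erase_of_mem hu, hK.card_eq]
      exact hdeg.le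
  exact mem_of_mem_erase (mem_coe.1 (nbrs ▸ huy : y ∈ (K.erase u : Set V)))

lemma ThreeConnected.eq_of_mem_isNClique_four [Fintype V] (h3 : ThreeConnected G)
    (hV : 4 < Fintype.card V) {K : Finset V} (hK : G.IsNClique 4 K) {u w : V} (hu : u ∈ K)
    (hw : w ∈ K) (hdu : deg G u = 3) (hdw : deg G w = 3) : u = w := by
  classical
  by_contra hne
  obtain ⟨z, -, hz⟩ := exists_mem_notMem_of_card_lt_card (hK.card_eq.trans_lt hV)
  have hS : ((K \ {u, w} : Finset V) : Set V).ncard ≤ 2 := by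
    rw [Set.ncard_coe_finset, card_sdiff_of_subset (by grind), hK.card_eq, card_pair hne]
  obtain ⟨x, hx, y, hy, hxy⟩ := h3.exists_adj (A := K) hS ⟨u, by simp [hu]⟩ ⟨z, by simp [hz]⟩
  have x_eq : x = u ∨ x = w := by
    simp only [coe_sdiff, Set.mem_sdiff, mem_coe] at hx
    grind
  refine hy.1 (mem_of_adj_of_deg_eq hK (k := 3) hx.1 ?_ hxy)
  rcases x_eq with rfl | rfl <;> assumption

lemma card_mul_le_deg_of_isNClique [Finite V] [DecidableEq V] {k : ℕ} {𝒦 : Finset (Finset V)}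
    {v : V} (hK : ∀ K ∈ 𝒦, G.IsNClique (k + 1) K) (hv : ∀ K ∈ 𝒦, v ∈ K)
    (hinter : (𝒦 : Set (Finset V)).Pairwise fun K L ↦ #(K ∩ L) ≤ 1) : #𝒦 * k ≤ deg G v := by
  have disjoint : (𝒦 : Set (Finset V)).PairwiseDisjoint fun K ↦ K.erase v := by
    intro K hK' L hL' hKL
    have inter_le := card_le_one.1 (hinter hK' hL' hKL)
    refine disjoint_left.2 fun x hx hx' ↦ ?_
    rw [mem_erase] at hx hx'
    exact hx.1 (inter_le x (mem_inter.2 ⟨hx.2, hx'.2⟩) v (mem_inter.2 ⟨hv K hK', hv L hL'⟩))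
  have card_union : #(𝒦.biUnion fun K ↦ K.erase v) = #𝒦 * k := by
    rw [card_biUnion disjoint]
    refine sum_const_nat fun K hK' ↦ ?_
    rw [card_erase_of_mem (hv K hK'), (hK K hK').card_eq, add_tsub_cancel_right]
  rw [← card_union, ← Set.ncard_coe_finset]
  refine Set.ncard_le_ncard fun x hx ↦ ?_
  simp only [coe_biUnion, Set.mem_iUnion, mem_coe, mem_erase] at hx
  obtain ⟨K, hK', hxv, hxK⟩ := hx
  exact (hK K hK').isClique (hv K hK') hxK hxv.symm

end Cliques

namespace IsCircuit

open Finset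

variable [Fintype V] {G : SimpleGraph V}

lemma card_inter_le_one_of_isNClique_four [DecidableEq V] (hG : IsCircuit G)
    (h3 : ThreeConnected G) (hV : 6 ≤ Fintype.card V) {K L : Finset V} (hK : G.IsNClique 4 K)
    (hL : G.IsNClique 4 L) (hne : K ≠ L) : #(K ∩ L) ≤ 1 := by
  by_contra! two_le
  have hKL : ¬ K ⊆ L := fun h ↦ hne (eq_of_subset_of_card_le h (by rw [hK.card_eq, hL.card_eq]))
  have hLK : ¬ L ⊆ K := fun h ↦
    hne (eq_of_subset_of_card_le h (by rw [hK.card_eq, hL.card_eq])).symm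
  have lt_four : #(K ∩ L) < 4 := hK.card_eq ▸ card_lt_card (inf_lt_left.2 hKL)
  have six : Nat.choose 4 2 = 6 := rfl
  have edges := indEdges_add_indEdges_add_crossEdges G K L
  rw [indEdges_eq_choose_two hK.isClique, indEdges_eq_choose_two hL.isClique, hK.card_eq,
    hL.card_eq, six, ← coe_union, ← coe_inter] at edges
  have inter_edges := indEdges_le_choose_two G (K ∩ L)
  have card_union := card_union_add_card_inter K L
  rw [hK.card_eq, hL.card_eq] at card_union
  by_cases hu : K ∪ L = univ
  · have inter_two : #(K ∩ L) = 2 := by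
      rw [hu, card_univ] at card_union
      omega
    have cross : 0 < crossEdges G (K \ L : Set V) (L \ K) :=
      h3.crossEdges_sdiff_pos (by rw [← coe_union, hu, coe_univ])
        (by rw [← coe_inter, Set.ncard_coe_finset, inter_two]) (by simpa) (by simpa)
    have := hG.ncard_edgeSet_add_one
    rw [hu, coe_univ, indEdges_univ] at edges
    rw [hu, card_univ] at card_union
    rw [inter_two, Nat.choose_self] at inter_edges
    omega
  · have sparse := hG.2 (K ∪ L) (ssubset_univ_iff.2 hu)
    obtain h | h : #(K ∩ L) = 2 ∨ #(K ∩ L) = 3 := by omega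
    all_goals
      rw [h] at inter_edges
      simp only [Nat.choose] at inter_edges
      omega

lemma exists_mem_five_le_deg [DecidableEq V] (hG : IsCircuit G) (h3 : ThreeConnected G)
    (hV : 6 ≤ Fintype.card V) (hcut : ¬ HasNontrivialThreeEdgeCut G) {K : Finset V}
    (hK : G.IsNClique 4 K) {u : V} (hu : u ∈ K) (hdeg : deg G u = 3) :
    ∃ v ∈ K, 5 ≤ deg G v := by
  by_contra! lt_five
  refine hcut (hasNontrivialThreeEdgeCut_of_sum_deg (X := K) ?_ ?_ ?_)
  · rw [hK.card_eq]; norm_num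
  · rw [hK.card_eq]; exact hV
  · have four : ∀ v ∈ K.erase u, deg G v = 4 := by
      intro v hv
      rw [mem_erase] at hv
      have := hG.three_le_deg v
      have := lt_five v hv.2
      have : deg G v ≠ 3 := fun h ↦
        hv.1 (h3.eq_of_mem_isNClique_four (by omega) hK hv.2 hu h hdeg)
      omega
    rw [← add_sum_erase K _ hu, sum_const_nat four, card_erase_of_mem hu, hdeg,
      indEdges_eq_choose_two hK.isClique, hK.card_eq]
    rfl

lemma card_le_sum_deg_sub_four_of_isNClique_four [DecidableEq V] (hG : IsCircuit G)
    (h3 : ThreeConnected G) (hV : 6 ≤ Fintype.card V) (hcut : ¬ HasNontrivialThreeEdgeCut G)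
    {𝒦 : Finset (Finset V)} (hK : ∀ K ∈ 𝒦, G.IsNClique 4 K)
    (hnode : ∀ K ∈ 𝒦, ∃ u ∈ K, deg G u = 3) : #𝒦 ≤ ∑ v, (deg G v - 4) := by
  have charge : ∀ v, #{K ∈ 𝒦 | v ∈ K ∧ 5 ≤ deg G v} ≤ deg G v - 4 := by
    intro v
    by_cases hv : 5 ≤ deg G v
    · simp only [hv, and_true]
      have : #{K ∈ 𝒦 | v ∈ K} * 3 ≤ deg G v := by
        refine card_mul_le_deg_of_isNClique (by grind) (by grind) fun K hK' L hL' hne ↦ ?_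
        rw [coe_filter] at hK' hL'
        exact hG.card_inter_le_one_of_isNClique_four h3 hV (hK K hK'.1) (hK L hL'.1) hne
      omega
    · simp [hv]
  calc #𝒦 = ∑ K ∈ 𝒦, 1 := card_eq_sum_ones 𝒦
    _ ≤ ∑ K ∈ 𝒦, #{v | v ∈ K ∧ 5 ≤ deg G v} := by
      refine sum_le_sum fun K hK' ↦ ?_
      obtain ⟨u, hu, hdeg⟩ := hnode K hK'
      obtain ⟨v, hv, h5⟩ := hG.exists_mem_five_le_deg h3 hV hcut (hK K hK') hu hdeg
      exact card_pos.2 ⟨v, by simp [hv, h5]⟩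
    _ = ∑ v, #{K ∈ 𝒦 | v ∈ K ∧ 5 ≤ deg G v} :=
      sum_card_bipartiteAbove_eq_sum_card_bipartiteBelow _
    _ ≤ ∑ v, (deg G v - 4) := sum_le_sum fun v _ ↦ charge v

lemma card_le_sum_deg_sub_four_of_inK4 [DecidableEq V] (hG : IsCircuit G)
    (h3 : ThreeConnected G) (hV : 6 ≤ Fintype.card V) (hcut : ¬ HasNontrivialThreeEdgeCut G)
    {P : Finset V} (hnode : ∀ u ∈ P, deg G u = 3) (hP : ∀ u ∈ P, InK4 G u) :
    #P ≤ ∑ v, (deg G v - 4) := by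
  choose! K hmem hcard hadj using hP
  have clique : ∀ u ∈ P, G.IsNClique 4 (K u) := fun u hu ↦
    ⟨fun a ha b hb ↦ hadj u hu a ha b hb, hcard u hu⟩
  have injOn : Set.InjOn K P := fun u hu w hw h ↦
    h3.eq_of_mem_isNClique_four (by omega) (clique u hu) (hmem u hu) (h ▸ hmem w hw)
      (hnode u hu) (hnode w hw)
  rw [← card_image_of_injOn injOn]
  refine hG.card_le_sum_deg_sub_four_of_isNClique_four h3 hV hcut (forall_mem_image.2 clique) ?_
  exact forall_mem_image.2 fun u hu ↦ ⟨u, hmem u hu, hnode u hu⟩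

-- The subtraction truncates, so vertices of degree 3 contribute `0` rather than `-1` to the sum.
lemma card_deg_eq_three (hG : IsCircuit G) : #{v | deg G v = 3} = ∑ v, (deg G v - 4) + 2 := by
  have balance : ∑ v, (deg G v + if deg G v = 3 then 1 else 0) = ∑ v, (4 + (deg G v - 4)) := by
    refine sum_congr rfl fun v _ ↦ ?_
    have := hG.three_le_deg v
    split_ifs <;> omega
  rw [sum_add_distrib, sum_add_distrib, ← card_filter, sum_const_nat (fun _ _ ↦ rfl),
    card_univ] at balance
  have := hG.sum_deg_add_two
  omega

end IsCircuit

theorem nodes_not_in_K4_forest [Fintype V] [DecidableEq V] (G : SimpleGraph V)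
    (hG : IsCircuit G) (h3 : ThreeConnected G)
    (hcyc : ¬ IsCycleGraph G) (hwheel : ¬ IsWheel G)
    (hV : 6 ≤ Fintype.card V)
    (hcut : ¬ HasNontrivialThreeEdgeCut G) :
    (G.induce {x : V | deg G x = 3 ∧ ¬ InK4 G x}).IsAcyclic ∧
      2 ≤ {x : V | deg G x = 3 ∧ ¬ InK4 G x}.ncard := by
  classical
  refine ⟨hG.isAcyclic_induce fun v hv ↦ hv.1, ?_⟩
  let nodes : Finset V := {v | deg G v = 3}
  have in_K4 : (nodes.filter (InK4 G)).card ≤ ∑ v, (deg G v - 4) :=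
    hG.card_le_sum_deg_sub_four_of_inK4 h3 hV hcut (by simp +contextual [nodes]) (by simp)
  have total : nodes.card = ∑ v, (deg G v - 4) + 2 := hG.card_deg_eq_three
  have not_in_K4 : {x : V | deg G x = 3 ∧ ¬ InK4 G x}.ncard =
      (nodes.filter fun v ↦ ¬ InK4 G v).card := by
    rw [← Set.ncard_coe_finset]
    simp [nodes]
  have := Finset.card_filter_add_card_filter_not (s := nodes) (InK4 G)
  omega
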